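/- arXiv:math/0311488 — 2 statements merged into one kernel-verified Lean document; each statement's English description precedes it below -/
import Mathlib

section
/- Let U = ⊕_{k=1}^{d-1} U^{(k)} be the positively graded part of the derivation algebra of the free nilpotent Lie algebra L[V,d] of class d ≥ 2 (so U^{(k)} consists of derivations raising degree by k). Then U is a nilpotent Lie algebra of class exactly d−1, and the center of U equals the top homogeneous component U^{(d-1)}. -/
/-- The free nilpotent Lie algebra of class `d` on `n` generators: the quotient of the
free Lie algebra by the `d`-th term of its lower central series. -/
abbrev FreeNilpotentLieAlgebra (K : Type*) [Field K] (n d : ℕ) :=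
  FreeLieAlgebra K (Fin n) ⧸
    LieModule.lowerCentralSeries K (FreeLieAlgebra K (Fin n)) (FreeLieAlgebra K (Fin n)) d

/-- A derivation has (strictly) positive degree iff it pushes each term of the lower
central series filtration one step deeper: this characterizes membership in
`U = ⊕_{k=1}^{d-1} Der^{(k)}`. -/
def IsPosDegreeDerivation (K : Type*) [Field K] (n d : ℕ)
    (δ : LieDerivation K (FreeNilpotentLieAlgebra K n d) (FreeNilpotentLieAlgebra K n d)) :
    Prop :=
  ∀ k : ℕ, ∀ x ∈ LieModule.lowerCentralSeries K (FreeNilpotentLieAlgebra K n d)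
      (FreeNilpotentLieAlgebra K n d) k,
    δ x ∈ LieModule.lowerCentralSeries K (FreeNilpotentLieAlgebra K n d)
      (FreeNilpotentLieAlgebra K n d) (k + 1)

/-- Iterated (right-nested) Lie bracket of a list of elements. -/
def iterBracket {L : Type*} [LieRing L] : List L → L
  | [] => 0
  | [a] => a
  | a :: rest => ⁅a, iterBracket rest⁆

/-!
A derivation shifting the lower central series by `m` and one shifting it by `m'` have a commutator
shifting it by `m + m'`, so `d` derivations in `U` bracket to zero. The other two claims are tested
on the inner derivations, all of which lie in `U`. Since `⁅δ, ad x⁆ = ad (δ x)`, a derivation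
commuting with them takes values in the center, so it is enough that the center of the free
nilpotent Lie algebra of class `d` lies in the term `d - 1` of its lower central series. And the
`d - 1` derivations `ad x, …, ad x, ad y` bracket to `ad ⁅x, …, ⁅x, y⁆⁆`, which does not kill `x`.

For both facts, map the free Lie algebra `L` to the free associative algebra, filtered by word
length. If `a` has no constant term and `⁅x, a⁆` has no words of length `≤ m` for two different
letters `x`, then `a` has no words of length `< m`: a word can end in only one of the two letters,
and prefixing it with the other one gives a word of `⁅x, a⁆` with the same coefficient. In the same
way the word `x ⋯ x y` has coefficient `1` in `⁅x, …, ⁅x, y⁆⁆`. To return to `L`, the Dynkin map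
sends a word to its right-nested bracket; on `L` it restricts to the Euler derivation, which
multiplies the quotient of the terms `k` and `k + 1` of the lower central series by `k + 1`. Hence
an element of `L` whose words all have length `> m` lies in the term `m` as soon as `m!` is
invertible.
-/

open LieModule FreeMonoid
open scoped Nat

section LowerCentralSeries

variable {R L M : Type*} [CommRing R] [LieRing L] [LieAlgebra R L]
  [AddCommGroup M] [Module R M] [LieRingModule L M]

lemma lie_mem_lowerCentralSeries_succ {k : ℕ} (a : L) {b : M}
    (hb : b ∈ lowerCentralSeries R L M k) : ⁅a, b⁆ ∈ lowerCentralSeries R L M (k + 1) := by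
  rw [lowerCentralSeries_succ]
  exact LieSubmodule.lie_mem_lie (LieSubmodule.mem_top a) hb

variable [LieModule R L M]

lemma lowerCentralSeries_succ_le_iff {k : ℕ} {N : Submodule R M} :
    (lowerCentralSeries R L M (k + 1)).toSubmodule ≤ N ↔
      ∀ a : L, ∀ b ∈ lowerCentralSeries R L M k, ⁅a, b⁆ ∈ N := by
  refine ⟨fun h a b hb => h (lie_mem_lowerCentralSeries_succ a hb), fun h => ?_⟩
  rw [lowerCentralSeries_succ, LieSubmodule.lieIdeal_oper_eq_linear_span', Submodule.span_le]
  rintro _ ⟨a, -, b, hb, rfl⟩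
  exact h a b hb

lemma lie_mem_lowerCentralSeries_add {i j : ℕ} {a : L} {b : M}
    (ha : a ∈ lowerCentralSeries R L L i) (hb : b ∈ lowerCentralSeries R L M j) :
    ⁅a, b⁆ ∈ lowerCentralSeries R L M (i + j + 1) := by
  induction i generalizing j a b with
  | zero => simpa only [zero_add] using lie_mem_lowerCentralSeries_succ a hb
  | succ i ih =>
    suffices (lowerCentralSeries R L L (i + 1)).toSubmodule ≤
        (lowerCentralSeries R L M (i + 1 + j + 1)).toSubmodule.comap
          ((toEnd R L M : L →ₗ[R] Module.End R M).flip b) from this ha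
    refine lowerCentralSeries_succ_le_iff.2 fun x y hy => ?_
    have hx : ⁅x, ⁅y, b⁆⁆ ∈ lowerCentralSeries R L M (i + 1 + j + 1) := by
      rw [show i + 1 + j = i + j + 1 by omega]
      exact lie_mem_lowerCentralSeries_succ x (ih hy hb)
    have hy : ⁅y, ⁅x, b⁆⁆ ∈ lowerCentralSeries R L M (i + 1 + j + 1) := by
      rw [show i + 1 + j = i + (j + 1) by omega]
      exact ih hy (lie_mem_lowerCentralSeries_succ x hb)
    simpa [lie_lie] using sub_mem hx hy

end LowerCentralSeries

section IterBracket

variable {R L L' : Type*} [CommRing R] [LieRing L] [LieAlgebra R L] [LieRing L'] [LieAlgebra R L']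

lemma iterBracket_cons (a : L) {l : List L} (hl : l ≠ []) :
    iterBracket (a :: l) = ⁅a, iterBracket l⁆ := by
  cases l with
  | nil => exact absurd rfl hl
  | cons b l => rfl

lemma map_iterBracket (f : L →ₗ⁅R⁆ L') (l : List L) :
    f (iterBracket l) = iterBracket (l.map f) := by
  induction l with
  | nil => exact map_zero f
  | cons a l ih =>
    rcases eq_or_ne l [] with rfl | hl
    · rfl
    · rw [List.map_cons, iterBracket_cons a hl, iterBracket_cons _ (by simpa using hl),
        LieHom.map_lie, ih]

-- The index `0 - 1` is `0`, which is right for the empty list too.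
lemma iterBracket_mem_lowerCentralSeries (l : List L) :
    iterBracket l ∈ lowerCentralSeries R L L (l.length - 1) := by
  induction l with
  | nil => exact zero_mem _
  | cons a l ih =>
    rcases eq_or_ne l [] with rfl | hl
    · exact LieSubmodule.mem_top a
    · have h := lie_mem_lowerCentralSeries_succ a ih
      rwa [Nat.sub_add_cancel (List.length_pos_iff.2 hl), ← iterBracket_cons a hl] at h

end IterBracket

section Derivations

variable {R L : Type*} [CommRing R] [LieRing L] [LieAlgebra R L]

/-- The derivation `D` has degree at least `m` for the filtration of `L` by its lower central
series. For free nilpotent `L` these are the sums of homogeneous derivations of degrees `≥ m`. -/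
def ShiftsLowerCentralSeries (m : ℕ) (D : LieDerivation R L L) : Prop :=
  ∀ k : ℕ, ∀ x ∈ lowerCentralSeries R L L k, D x ∈ lowerCentralSeries R L L (k + m)

namespace ShiftsLowerCentralSeries

variable {m m' : ℕ} {D D' : LieDerivation R L L}

lemma of_forall_mem (h : ∀ x, D x ∈ lowerCentralSeries R L L m) :
    ShiftsLowerCentralSeries m D := by
  intro k
  induction k with
  | zero => exact fun x _ => by simpa only [zero_add] using h x
  | succ k ih =>
    refine lowerCentralSeries_succ_le_iff
      (N := (lowerCentralSeries R L L (k + 1 + m)).toSubmodule.comap (D : L →ₗ[R] L)).2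
      fun a b hb => ?_
    have ha : ⁅a, D b⁆ ∈ lowerCentralSeries R L L (k + m + 1) :=
      lie_mem_lowerCentralSeries_succ a (ih b hb)
    have hb : ⁅b, D a⁆ ∈ lowerCentralSeries R L L (k + m + 1) :=
      lie_mem_lowerCentralSeries_add hb (h a)
    rw [Nat.add_right_comm]
    simpa using sub_mem ha hb

protected lemma lie (h : ShiftsLowerCentralSeries m D) (h' : ShiftsLowerCentralSeries m' D') :
    ShiftsLowerCentralSeries (m + m') ⁅D, D'⁆ := by
  intro k x hx
  rw [LieDerivation.lie_apply]
  refine sub_mem ?_ ?_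
  · rw [Nat.add_comm m, ← Nat.add_assoc]
    exact h _ _ (h' k x hx)
  · rw [← Nat.add_assoc]
    exact h' _ _ (h k x hx)

protected lemma iterBracket {l : List (LieDerivation R L L)}
    (hl : ∀ D ∈ l, ShiftsLowerCentralSeries 1 D) :
    ShiftsLowerCentralSeries l.length (iterBracket l) := by
  induction l with
  | nil => exact fun k x _ => zero_mem _
  | cons D l ih =>
    rw [List.forall_mem_cons] at hl
    rcases eq_or_ne l [] with rfl | hne
    · exact hl.1
    · rw [iterBracket_cons D hne, List.length_cons, Nat.add_comm]
      exact hl.1.lie (ih hl.2)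

lemma eq_zero (h : ShiftsLowerCentralSeries m D) (hL : lowerCentralSeries R L L m = ⊥) :
    D = 0 := by
  ext x
  simpa [hL] using h 0 x (LieSubmodule.mem_top x)

protected lemma ad (x : L) : ShiftsLowerCentralSeries 1 (LieDerivation.ad R L x) := by
  intro k y hy
  simpa using lie_mem_lowerCentralSeries_succ x hy

end ShiftsLowerCentralSeries

lemma forall_lie_eq_zero_iff_shiftsLowerCentralSeries {m : ℕ}
    (hL : lowerCentralSeries R L L (m + 1) = ⊥)
    (hcenter : LieAlgebra.center R L ≤ lowerCentralSeries R L L m) (D : LieDerivation R L L) :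
    (∀ D' : LieDerivation R L L, ShiftsLowerCentralSeries 1 D' → ⁅D, D'⁆ = 0) ↔
      ShiftsLowerCentralSeries m D := by
  refine ⟨fun h => .of_forall_mem fun x => hcenter ?_, fun h D' h' => (h.lie h').eq_zero hL⟩
  rw [← LieDerivation.ad_ker_eq_center, LieHom.mem_ker, ← LieDerivation.lie_der_ad_eq_ad_der]
  exact h _ (.ad x)

section Euler

variable {D : LieDerivation R L L} (hD : ∀ x, D x - x ∈ lowerCentralSeries R L L 1)
include hD

lemma apply_sub_nsmul_mem_lowerCentralSeries_succ {k : ℕ} {x : L}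
    (hx : x ∈ lowerCentralSeries R L L k) :
    D x - (k + 1) • x ∈ lowerCentralSeries R L L (k + 1) := by
  induction k generalizing x with
  | zero => simpa using hD x
  | succ k ih =>
    suffices (lowerCentralSeries R L L (k + 1)).toSubmodule ≤
        (lowerCentralSeries R L L (k + 1 + 1)).toSubmodule.comap
          ((D : L →ₗ[R] L) - (k + 1 + 1) • LinearMap.id) from this hx
    refine lowerCentralSeries_succ_le_iff.2 fun a b hb => ?_
    have hab : D ⁅a, b⁆ - (k + 1 + 1) • ⁅a, b⁆ = ⁅a, D b - (k + 1) • b⁆ - ⁅b, D a - a⁆ := by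
      rw [LieDerivation.apply_lie_eq_sub, lie_sub, lie_sub, lie_nsmul, ← lie_skew a b,
        succ_nsmul _ (k + 1)]
      abel
    have ha := lie_mem_lowerCentralSeries_succ a (ih hb)
    have hb := lie_mem_lowerCentralSeries_add hb (hD a)
    change D ⁅a, b⁆ - (k + 1 + 1) • ⁅a, b⁆ ∈ lowerCentralSeries R L L (k + 1 + 1)
    rw [hab]
    exact sub_mem ha hb

lemma mem_lowerCentralSeries_of_apply_mem {m : ℕ} (hm : IsUnit (m ! : R)) {x : L}
    (hx : D x ∈ lowerCentralSeries R L L m) : x ∈ lowerCentralSeries R L L m := by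
  suffices ∀ k ≤ m, x ∈ lowerCentralSeries R L L k from this m le_rfl
  intro k hk
  induction k with
  | zero => exact LieSubmodule.mem_top x
  | succ k ih =>
    have hDx : D x ∈ lowerCentralSeries R L L (k + 1) := antitone_lowerCentralSeries R L L hk hx
    have hsmul : (k + 1) • x ∈ lowerCentralSeries R L L (k + 1) := by
      simpa using sub_mem hDx
        (apply_sub_nsmul_mem_lowerCentralSeries_succ hD (ih (Nat.le_of_succ_le hk)))
    have hunit : IsUnit ((k + 1 : ℕ) : R) :=
      isUnit_of_dvd_unit (Nat.cast_dvd_cast (Nat.dvd_factorial k.succ_pos hk)) hm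
    rw [← Nat.cast_smul_eq_nsmul R] at hsmul
    exact ((lowerCentralSeries R L L (k + 1)).toSubmodule.smul_mem_iff_of_isUnit hunit).1 hsmul

end Euler

end Derivations

section WordAlgebra

attribute [local instance] LieRing.ofAssociativeRing

variable {R X : Type*} [CommRing R]

/-- The free associative algebra on `X`, as the algebra of the monoid of words, so that elements
have coefficients indexed by words. -/
abbrev WordAlgebra (R X : Type*) [CommRing R] := MonoidAlgebra R (FreeMonoid X)

/-- The one-letter word `x` as a generator of the free associative algebra. -/
noncomputable abbrev letter (R : Type*) {X : Type*} [CommRing R] (x : X) : WordAlgebra R X :=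
  MonoidAlgebra.single (of x) 1

/-- The filtration of the free associative algebra by word length (the powers of the augmentation
ideal): term `k` consists of the combinations of words of length at least `k`. -/
noncomputable def wordFiltration (R X : Type*) [CommRing R] (k : ℕ) :
    Submodule R (WordAlgebra R X) :=
  MonoidAlgebra.supported R R {w | k ≤ w.length}

lemma mem_wordFiltration {k : ℕ} {a : WordAlgebra R X} :
    a ∈ wordFiltration R X k ↔ ∀ w : FreeMonoid X, w.length < k → a.coeff w = 0 := by
  simp [wordFiltration, MonoidAlgebra.mem_supported']

lemma wordFiltration_eq_span (k : ℕ) : wordFiltration R X k =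
    Submodule.span R ((fun w => MonoidAlgebra.single w 1) '' {w | k ≤ w.length}) :=
  MonoidAlgebra.supported_eq_span_single R _

lemma wordFiltration_antitone : Antitone (wordFiltration R X) :=
  fun _ _ hij => MonoidAlgebra.supported_mono fun _ hw => hij.trans hw

lemma mul_mem_wordFiltration {i j : ℕ} {a b : WordAlgebra R X} (ha : a ∈ wordFiltration R X i)
    (hb : b ∈ wordFiltration R X j) : a * b ∈ wordFiltration R X (i + j) := by
  suffices wordFiltration R X i * wordFiltration R X j ≤ wordFiltration R X (i + j) from
    this (Submodule.mul_mem_mul ha hb)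
  simp only [wordFiltration_eq_span, Submodule.span_mul_span]
  refine Submodule.span_mono ?_
  rintro _ ⟨_, ⟨u, hu, rfl⟩, _, ⟨v, hv, rfl⟩, rfl⟩
  exact ⟨u * v, by simpa using add_le_add hu hv, by simp⟩

lemma lie_mem_wordFiltration {i j : ℕ} {a b : WordAlgebra R X} (ha : a ∈ wordFiltration R X i)
    (hb : b ∈ wordFiltration R X j) : ⁅a, b⁆ ∈ wordFiltration R X (i + j) := by
  rw [Ring.lie_def]
  exact sub_mem (mul_mem_wordFiltration ha hb) (Nat.add_comm i j ▸ mul_mem_wordFiltration hb ha)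

lemma letter_mem_wordFiltration_one (x : X) : letter R x ∈ wordFiltration R X 1 := by
  rw [wordFiltration_eq_span]
  exact Submodule.subset_span ⟨of x, (length_of x).ge, rfl⟩

lemma mul_of_ne_mul_of {x y : X} (hxy : x ≠ y) (u v : FreeMonoid X) : u * of x ≠ v * of y :=
  fun h => hxy (List.append_inj_right' (congrArg toList h) rfl |> List.singleton_inj.1)

lemma coeff_lie_letter {x y : X} (hxy : x ≠ y) (a : WordAlgebra R X) (v : FreeMonoid X) :
    ⁅letter R x, a⁆.coeff (of x * (v * of y)) = a.coeff (v * of y) := by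
  have hright : (a * letter R x).coeff (of x * (v * of y)) = 0 := by
    refine MonoidAlgebra.coeff_mul_single_of_forall_mul_ne _ _ fun u => ?_
    rw [← mul_assoc]
    exact mul_of_ne_mul_of hxy _ _
  simp [Ring.lie_def, hright]

lemma mem_wordFiltration_of_forall_lie_letter_mem [Nontrivial X] {m : ℕ} {a : WordAlgebra R X}
    (ha : a ∈ wordFiltration R X 1) (h : ∀ x : X, ⁅letter R x, a⁆ ∈ wordFiltration R X (m + 1)) :
    a ∈ wordFiltration R X m := by
  rw [mem_wordFiltration] at ha ⊢
  intro w hw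
  have hcases : w = 1 ∨ ∃ v y, w = v * of y := List.eq_nil_or_concat' w.toList
  rcases hcases with rfl | ⟨v, y, rfl⟩
  · exact ha 1 Nat.one_pos
  · obtain ⟨x, hxy⟩ := exists_ne y
    rw [← coeff_lie_letter hxy a v]
    refine mem_wordFiltration.1 (h x) _ ?_
    rw [length_mul, length_of, Nat.add_comm]
    exact Nat.succ_lt_succ hw

lemma coeff_iterBracket_map_letter {y : X} {l : List X} (hy : y ∉ l) :
    (iterBracket ((l ++ [y]).map (letter R))).coeff (ofList (l ++ [y])) = 1 := by
  induction l with
  | nil => simp [iterBracket]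
  | cons x l ih =>
    rw [List.mem_cons, not_or] at hy
    rw [List.cons_append, List.map_cons, iterBracket_cons _ (by simp)]
    exact (coeff_lie_letter (Ne.symm hy.1) _ (ofList l)).trans (ih hy.2)

end WordAlgebra

section FreeLieAlgebra

attribute [local instance] LieRing.ofAssociativeRing

variable {R X : Type*} [CommRing R]

lemma lieSpan_range_of :
    LieSubalgebra.lieSpan R (FreeLieAlgebra R X) (Set.range (FreeLieAlgebra.of R)) = ⊤ := by
  let S := LieSubalgebra.lieSpan R (FreeLieAlgebra R X) (Set.range (FreeLieAlgebra.of R))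
  let f : FreeLieAlgebra R X →ₗ⁅R⁆ S :=
    FreeLieAlgebra.lift R fun x => ⟨FreeLieAlgebra.of R x, LieSubalgebra.subset_lieSpan ⟨x, rfl⟩⟩
  have hf : S.incl.comp f = LieHom.id := FreeLieAlgebra.hom_ext fun x => by simp [f]
  rw [eq_top_iff]
  intro y _
  rw [← LieHom.id_apply (R := R) y, ← hf]
  exact (f y).2

lemma freeLieAlgebra_induction {p : FreeLieAlgebra R X → Prop} (y : FreeLieAlgebra R X)
    (of : ∀ x, p (FreeLieAlgebra.of R x)) (zero : p 0) (add : ∀ a b, p a → p b → p (a + b))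
    (smul : ∀ (c : R) a, p a → p (c • a)) (lie : ∀ a b, p a → p b → p ⁅a, b⁆) : p y := by
  have hy : y ∈ LieSubalgebra.lieSpan R (FreeLieAlgebra R X) (Set.range (FreeLieAlgebra.of R)) := by
    simp [lieSpan_range_of]
  induction hy using LieSubalgebra.lieSpan_induction with
  | mem _ h => obtain ⟨x, rfl⟩ := h; exact of x
  | zero => exact zero
  | add a b _ _ ha hb => exact add a b ha hb
  | smul c a _ ha => exact smul c a ha
  | lie a b _ _ ha hb => exact lie a b ha hb

/-- The canonical map from the free Lie algebra to the free associative algebra. -/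
noncomputable def toWordAlgebra (R X : Type*) [CommRing R] :
    FreeLieAlgebra R X →ₗ⁅R⁆ WordAlgebra R X :=
  FreeLieAlgebra.lift R (letter R)

@[simp]
lemma toWordAlgebra_of (x : X) : toWordAlgebra R X (FreeLieAlgebra.of R x) = letter R x :=
  FreeLieAlgebra.lift_of_apply _ x

lemma toWordAlgebra_mem_wordFiltration_one (y : FreeLieAlgebra R X) :
    toWordAlgebra R X y ∈ wordFiltration R X 1 := by
  induction y using freeLieAlgebra_induction with
  | of x => simpa using letter_mem_wordFiltration_one x
  | zero => simp
  | add a b ha hb => simpa using add_mem ha hb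
  | smul c a ha => simpa using Submodule.smul_mem _ c ha
  | lie a b ha hb =>
    rw [LieHom.map_lie]
    exact wordFiltration_antitone one_le_two (lie_mem_wordFiltration ha hb)

lemma toWordAlgebra_mem_wordFiltration {k : ℕ} {y : FreeLieAlgebra R X}
    (hy : y ∈ lowerCentralSeries R (FreeLieAlgebra R X) (FreeLieAlgebra R X) k) :
    toWordAlgebra R X y ∈ wordFiltration R X (k + 1) := by
  induction k generalizing y with
  | zero => exact toWordAlgebra_mem_wordFiltration_one y
  | succ k ih =>
    refine lowerCentralSeries_succ_le_iff (N := (wordFiltration R X (k + 1 + 1)).comap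
      (toWordAlgebra R X : FreeLieAlgebra R X →ₗ[R] WordAlgebra R X)).2 (fun a b hb => ?_) hy
    have h := lie_mem_wordFiltration (toWordAlgebra_mem_wordFiltration_one a) (ih hb)
    rw [Nat.add_comm] at h
    simpa using h

/-- The Dynkin map, sending a word `x₁ ⋯ xₖ` to the bracket `⁅x₁, ⁅x₂, …, xₖ⁆⁆`. -/
noncomputable def dynkin (R X : Type*) [CommRing R] : WordAlgebra R X →ₗ[R] FreeLieAlgebra R X :=
  (MonoidAlgebra.basis (FreeMonoid X) R).constr R
    fun w => iterBracket (w.toList.map (FreeLieAlgebra.of R))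

lemma dynkin_single_one (w : FreeMonoid X) : dynkin R X (MonoidAlgebra.single w 1) =
    iterBracket (w.toList.map (FreeLieAlgebra.of R)) := by
  rw [dynkin, ← MonoidAlgebra.basis_apply, Module.Basis.constr_basis]

lemma dynkin_mem_lowerCentralSeries {m : ℕ} {a : WordAlgebra R X}
    (ha : a ∈ wordFiltration R X (m + 1)) :
    dynkin R X a ∈ lowerCentralSeries R (FreeLieAlgebra R X) (FreeLieAlgebra R X) m := by
  suffices wordFiltration R X (m + 1) ≤ (lowerCentralSeries R (FreeLieAlgebra R X)
      (FreeLieAlgebra R X) m).toSubmodule.comap (dynkin R X) from this ha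
  rw [wordFiltration_eq_span, Submodule.span_le]
  rintro _ ⟨w, hw, rfl⟩
  have hlen : m ≤ (w.toList.map (FreeLieAlgebra.of R)).length - 1 := by
    rw [List.length_map]
    exact Nat.le_sub_one_of_lt hw
  simpa [dynkin_single_one] using
    antitone_lowerCentralSeries R _ _ hlen (iterBracket_mem_lowerCentralSeries _)

lemma dynkin_letter_mul (x : X) {b : WordAlgebra R X} (hb : b ∈ wordFiltration R X 1) :
    dynkin R X (letter R x * b) = ⁅FreeLieAlgebra.of R x, dynkin R X b⁆ := by
  suffices wordFiltration R X 1 ≤ LinearMap.eqLocus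
      (dynkin R X ∘ₗ LinearMap.mulLeft R (letter R x))
      (LieAlgebra.ad R _ (FreeLieAlgebra.of R x) ∘ₗ dynkin R X) from this hb
  rw [wordFiltration_eq_span, Submodule.span_le]
  rintro _ ⟨w, hw, rfl⟩
  have hne : w.toList.map (FreeLieAlgebra.of R) ≠ [] := by
    simpa using List.length_pos_iff.1 hw
  simp [dynkin_single_one, iterBracket_cons _ hne]

lemma dynkin_toWordAlgebra_mul (y : FreeLieAlgebra R X) {b : WordAlgebra R X}
    (hb : b ∈ wordFiltration R X 1) :
    dynkin R X (toWordAlgebra R X y * b) = ⁅y, dynkin R X b⁆ := by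
  induction y using freeLieAlgebra_induction generalizing b with
  | of x => rw [toWordAlgebra_of, dynkin_letter_mul x hb]
  | zero => simp
  | add a c ha hc => rw [map_add, add_mul, map_add, ha hb, hc hb, add_lie]
  | smul t a ha => rw [map_smul, smul_mul_assoc, map_smul, ha hb, smul_lie]
  | lie a c ha hc =>
    have hmul (z : FreeLieAlgebra R X) : toWordAlgebra R X z * b ∈ wordFiltration R X 1 :=
      wordFiltration_antitone one_le_two
        (mul_mem_wordFiltration (toWordAlgebra_mem_wordFiltration_one z) hb)
    rw [LieHom.map_lie, Ring.lie_def, sub_mul, mul_assoc, mul_assoc, map_sub, ha (hmul c),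
      hc hb, hc (hmul a), ha hb, lie_lie]

/-- The Euler derivation of the free Lie algebra, the one fixing the generators. It is obtained by
restricting the Dynkin map, which makes it compatible with the filtration by word length. -/
noncomputable def euler (R X : Type*) [CommRing R] :
    LieDerivation R (FreeLieAlgebra R X) (FreeLieAlgebra R X) where
  toLinearMap := dynkin R X ∘ₗ (toWordAlgebra R X : FreeLieAlgebra R X →ₗ[R] WordAlgebra R X)
  leibniz' a b := by
    have h := dynkin_toWordAlgebra_mul (R := R) (X := X)
    simp [Ring.lie_def, h _ (toWordAlgebra_mem_wordFiltration_one _)]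

lemma euler_apply (y : FreeLieAlgebra R X) : euler R X y = dynkin R X (toWordAlgebra R X y) := rfl

lemma euler_of (x : X) : euler R X (FreeLieAlgebra.of R x) = FreeLieAlgebra.of R x := by
  rw [euler_apply, toWordAlgebra_of, dynkin_single_one]
  rfl

lemma euler_sub_self_mem_lowerCentralSeries_one (y : FreeLieAlgebra R X) :
    euler R X y - y ∈ lowerCentralSeries R (FreeLieAlgebra R X) (FreeLieAlgebra R X) 1 := by
  induction y using freeLieAlgebra_induction with
  | of x => simp [euler_of]
  | zero => simp
  | add a b ha hb =>
    rw [map_add, add_sub_add_comm]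
    exact add_mem ha hb
  | smul c a ha =>
    rw [map_smul, ← smul_sub]
    exact SMulMemClass.smul_mem c ha
  | lie a b _ _ =>
    have hlie (u v : FreeLieAlgebra R X) :
        ⁅u, v⁆ ∈ lowerCentralSeries R (FreeLieAlgebra R X) (FreeLieAlgebra R X) 1 :=
      lie_mem_lowerCentralSeries_succ u (LieSubmodule.mem_top v)
    rw [LieDerivation.apply_lie_eq_sub]
    exact sub_mem (sub_mem (hlie _ _) (hlie _ _)) (hlie _ _)

lemma mem_lowerCentralSeries_iff_toWordAlgebra_mem {m : ℕ} (hm : IsUnit (m ! : R))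
    {y : FreeLieAlgebra R X} :
    y ∈ lowerCentralSeries R (FreeLieAlgebra R X) (FreeLieAlgebra R X) m ↔
      toWordAlgebra R X y ∈ wordFiltration R X (m + 1) :=
  ⟨toWordAlgebra_mem_wordFiltration, fun h => mem_lowerCentralSeries_of_apply_mem
    euler_sub_self_mem_lowerCentralSeries_one hm (dynkin_mem_lowerCentralSeries h)⟩

lemma mem_lowerCentralSeries_of_forall_lie_of_mem [Nontrivial X] {m : ℕ} (hm : IsUnit (m ! : R))
    {y : FreeLieAlgebra R X} (hy : ∀ x : X, ⁅FreeLieAlgebra.of R x, y⁆ ∈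
      lowerCentralSeries R (FreeLieAlgebra R X) (FreeLieAlgebra R X) (m + 1)) :
    y ∈ lowerCentralSeries R (FreeLieAlgebra R X) (FreeLieAlgebra R X) m := by
  rw [mem_lowerCentralSeries_iff_toWordAlgebra_mem hm]
  refine mem_wordFiltration_of_forall_lie_letter_mem (toWordAlgebra_mem_wordFiltration_one y)
    fun x => ?_
  simpa using toWordAlgebra_mem_wordFiltration (hy x)

lemma iterBracket_map_of_notMem_lowerCentralSeries [Nontrivial R] {y : X} {l : List X}
    (hy : y ∉ l) : iterBracket ((l ++ [y]).map (FreeLieAlgebra.of R)) ∉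
      lowerCentralSeries R (FreeLieAlgebra R X) (FreeLieAlgebra R X) (l.length + 1) := by
  intro h
  have hmap : (l ++ [y]).map (toWordAlgebra R X ∘ FreeLieAlgebra.of R) =
      (l ++ [y]).map (letter R) :=
    List.map_congr_left fun x _ => toWordAlgebra_of x
  have hcoeff := coeff_iterBracket_map_letter (R := R) hy
  rw [← hmap, ← List.map_map, ← map_iterBracket, mem_wordFiltration.1
    (toWordAlgebra_mem_wordFiltration h) _ (by simp [FreeMonoid.length])] at hcoeff
  exact zero_ne_one hcoeff

end FreeLieAlgebra

section NilpotentQuotient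

variable {R L X : Type*} [CommRing R] [LieRing L] [LieAlgebra R L]

/-- The largest quotient of `L` that is nilpotent of class at most `d`. -/
abbrev NilpotentQuotient (R L : Type*) [CommRing R] [LieRing L] [LieAlgebra R L] (d : ℕ) :=
  L ⧸ lowerCentralSeries R L L d

namespace NilpotentQuotient

/-- The projection of `L` onto its quotient `NilpotentQuotient R L d`, as a morphism of Lie
algebras. -/
def mk (R L : Type*) [CommRing R] [LieRing L] [LieAlgebra R L] (d : ℕ) :
    L →ₗ⁅R⁆ NilpotentQuotient R L d where
  toLinearMap := LieSubmodule.Quotient.mk' (lowerCentralSeries R L L d)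
  map_lie' := rfl

variable {d : ℕ}

lemma mk_surjective : Function.Surjective (mk R L d) :=
  LieSubmodule.Quotient.surjective_mk' _

lemma mk_eq_zero {y : L} : mk R L d y = 0 ↔ y ∈ lowerCentralSeries R L L d :=
  LieSubmodule.Quotient.mk_eq_zero _

lemma lowerCentralSeries_eq_bot :
    lowerCentralSeries R (NilpotentQuotient R L d) (NilpotentQuotient R L d) d = ⊥ := by
  rw [← LieIdeal.lowerCentralSeries_map_eq d mk_surjective, LieIdeal.map_eq_bot_iff]
  exact fun y hy => mk_eq_zero.2 hy

lemma mk_mem_center {y : L} : mk R L d y ∈ LieAlgebra.center R (NilpotentQuotient R L d) ↔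
    ∀ z : L, ⁅z, y⁆ ∈ lowerCentralSeries R L L d := by
  simp only [mem_maxTrivSubmodule, mk_surjective.forall, ← LieHom.map_lie, mk_eq_zero]

lemma center_le_lowerCentralSeries [Nontrivial X] {m : ℕ} (hm : IsUnit (m ! : R)) :
    LieAlgebra.center R (NilpotentQuotient R (FreeLieAlgebra R X) (m + 1)) ≤
      lowerCentralSeries R (NilpotentQuotient R (FreeLieAlgebra R X) (m + 1))
        (NilpotentQuotient R (FreeLieAlgebra R X) (m + 1)) m := by
  intro z hz
  obtain ⟨y, rfl⟩ := mk_surjective z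
  exact LieIdeal.map_lowerCentralSeries_le m (LieIdeal.mem_map
    (mem_lowerCentralSeries_of_forall_lie_of_mem hm fun x => mk_mem_center.1 hz _))

lemma exists_iterBracket_ne_zero [Nontrivial R] [Nontrivial X] (m : ℕ) :
    ∃ l : List (LieDerivation R (NilpotentQuotient R (FreeLieAlgebra R X) (m + 2))
        (NilpotentQuotient R (FreeLieAlgebra R X) (m + 2))),
      l.length = m + 1 ∧ (∀ D ∈ l, ShiftsLowerCentralSeries 1 D) ∧ iterBracket l ≠ 0 := by
  obtain ⟨x, y, hxy⟩ := exists_pair_ne X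
  let adMk := (LieDerivation.ad R _).comp (mk R (FreeLieAlgebra R X) (m + 2))
  let w := (List.replicate m x ++ [y]).map (FreeLieAlgebra.of R)
  refine ⟨w.map adMk, by simp [w], ?_, fun h => ?_⟩
  · rw [List.forall_mem_map]
    exact fun z _ => .ad (mk R _ _ z)
  · have hcenter : mk R (FreeLieAlgebra R X) (m + 2) (iterBracket w) ∈
        LieAlgebra.center R (NilpotentQuotient R (FreeLieAlgebra R X) (m + 2)) := by
      rw [← LieDerivation.ad_ker_eq_center, LieHom.mem_ker]
      exact (map_iterBracket adMk w).trans h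
    have hmem := mk_mem_center.1 hcenter (FreeLieAlgebra.of R x)
    rw [← iterBracket_cons _ (by simp [w])] at hmem
    have hy : y ∉ List.replicate (m + 1) x := fun hy => hxy (List.eq_of_mem_replicate hy).symm
    refine iterBracket_map_of_notMem_lowerCentralSeries (R := R) hy ?_
    simpa [List.replicate_succ, w] using hmem

end NilpotentQuotient

end NilpotentQuotient

theorem posPart_derivations_nilpotent_class_and_center_general
    (R X : Type*) [CommRing R] [Nontrivial R] [Nontrivial X] (d : ℕ) (hd : 2 ≤ d)
    (hR : IsUnit ((d - 1)! : R)) :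
    (∀ l : List (LieDerivation R (NilpotentQuotient R (FreeLieAlgebra R X) d)
        (NilpotentQuotient R (FreeLieAlgebra R X) d)),
      l.length = d → (∀ δ ∈ l, ShiftsLowerCentralSeries 1 δ) → iterBracket l = 0) ∧
    (∃ l : List (LieDerivation R (NilpotentQuotient R (FreeLieAlgebra R X) d)
        (NilpotentQuotient R (FreeLieAlgebra R X) d)),
      l.length = d - 1 ∧ (∀ δ ∈ l, ShiftsLowerCentralSeries 1 δ) ∧ iterBracket l ≠ 0) ∧
    (∀ δ : LieDerivation R (NilpotentQuotient R (FreeLieAlgebra R X) d)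
        (NilpotentQuotient R (FreeLieAlgebra R X) d),
      (∀ δ' : LieDerivation R (NilpotentQuotient R (FreeLieAlgebra R X) d)
          (NilpotentQuotient R (FreeLieAlgebra R X) d),
        ShiftsLowerCentralSeries 1 δ' → ⁅δ, δ'⁆ = 0) ↔ ShiftsLowerCentralSeries (d - 1) δ) := by
  obtain ⟨m, rfl⟩ := Nat.exists_eq_add_of_le' hd
  refine ⟨fun l hl h => ?_, NilpotentQuotient.exists_iterBracket_ne_zero m,
    forall_lie_eq_zero_iff_shiftsLowerCentralSeries NilpotentQuotient.lowerCentralSeries_eq_bot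
      (NilpotentQuotient.center_le_lowerCentralSeries hR)⟩
  refine (ShiftsLowerCentralSeries.iterBracket h).eq_zero ?_
  rw [hl]
  exact NilpotentQuotient.lowerCentralSeries_eq_bot

/-- `U = UL[V,d]`, the positively graded part of the derivation algebra of the free
nilpotent Lie algebra of class `d ≥ 2` on `n ≥ 2` generators, is nilpotent of class
exactly `d − 1`, and its center consists exactly of the derivations of top degree
`d − 1` (those shifting the filtration by `d − 1`). -/
theorem posPart_derivations_nilpotent_class_and_center
    (K : Type*) [Field K] [CharZero K] (n d : ℕ) (hn : 2 ≤ n) (hd : 2 ≤ d) :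
    (∀ l : List (LieDerivation K (FreeNilpotentLieAlgebra K n d)
        (FreeNilpotentLieAlgebra K n d)),
      l.length = d → (∀ δ ∈ l, IsPosDegreeDerivation K n d δ) → iterBracket l = 0) ∧
    (∃ l : List (LieDerivation K (FreeNilpotentLieAlgebra K n d)
        (FreeNilpotentLieAlgebra K n d)),
      l.length = d - 1 ∧ (∀ δ ∈ l, IsPosDegreeDerivation K n d δ) ∧ iterBracket l ≠ 0) ∧
    (∀ δ : LieDerivation K (FreeNilpotentLieAlgebra K n d) (FreeNilpotentLieAlgebra K n d),
      IsPosDegreeDerivation K n d δ →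
        ((∀ δ', IsPosDegreeDerivation K n d δ' → ⁅δ, δ'⁆ = 0) ↔
          (∀ k : ℕ, ∀ x ∈ LieModule.lowerCentralSeries K (FreeNilpotentLieAlgebra K n d)
              (FreeNilpotentLieAlgebra K n d) k,
            δ x ∈ LieModule.lowerCentralSeries K (FreeNilpotentLieAlgebra K n d)
              (FreeNilpotentLieAlgebra K n d) (k + (d - 1))))) := by
  have := Fin.nontrivial_iff_two_le.2 hn
  have hfac : IsUnit ((d - 1)! : K) := .mk0 _ (Nat.cast_ne_zero.2 (Nat.factorial_ne_zero _))
  exact (posPart_derivations_nilpotent_class_and_center_general K (Fin n) d hd hfac).imp_right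
    (.imp_right fun hcenter δ _ => hcenter δ)
end

section
/- Let g be a finite-dimensional Lie algebra over a field of characteristic 0 with trivial center. Then the derivation tower g ⊆ Der(g) ⊆ Der²(g) ⊆ ⋯ (where each algebra is identified with the ideal of inner derivations in the next, all maps being injective since all the algebras have trivial center) stabilizes after finitely many steps: there exists k such that every derivation of Der^k(g) is inner. -/
universe u v

/-- A bundled Lie algebra over `K`, used to form the derivation tower. -/
structure LieAlgBundle (K : Type u) [CommRing K] : Type (max u (v + 1)) where
  carrier : Type v
  [lieRing : LieRing carrier]
  [lieAlgebra : LieAlgebra K carrier]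

attribute [instance] LieAlgBundle.lieRing LieAlgBundle.lieAlgebra

/-- The derivation tower: `derTower K B 0 = B` and
`derTower K B (n+1) = Der (derTower K B n)`. -/
def derTower (K : Type u) [CommRing K] (B : LieAlgBundle.{u, v} K) :
    ℕ → LieAlgBundle.{u, v} K
  | 0 => B
  | n + 1 =>
      { carrier := LieDerivation K (derTower K B n).carrier (derTower K B n).carrier }

/-!
Call a subalgebra `H` of `L` a weak subideal if `[H, [H, …, [H, L]]] ⊆ H` for some number of
brackets. Along the derivation tower the image of `g` stays a weak subideal, because
`⁅ad h, D⁆ = -ad (D h)` gains one bracket per step, and its centralizer stays trivial.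

It therefore suffices to bound `dim L` in terms of a weak subideal `H` with trivial centralizer
(Schenkman). The intersection `W` of the lower central series of `H` is an ideal of `L`. On the
centralizer of `W` the algebra `H` acts through a nilpotent quotient and without invariants, so by
the Fitting decomposition this centralizer lies in every term of the lower central series of the
`H`-module `L`, hence in `W`. Thus `L / W` is a quotient of a subalgebra of `End W`, and
`dim L ≤ (dim W)² + dim W`.
-/

namespace DerivationTower

open LieModule

attribute [local instance] LieRing.ofAssociativeRing

section LowerCentralSeries

variable {R L M : Type*} [CommRing R] [LieRing L] [LieAlgebra R L]
  [AddCommGroup M] [Module R M] [LieRingModule L M]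

lemma lie_mem_lowerCentralSeries_succ {k : ℕ} (x : L) {m : M}
    (hm : m ∈ lowerCentralSeries R L M k) : ⁅x, m⁆ ∈ lowerCentralSeries R L M (k + 1) := by
  rw [lowerCentralSeries_succ]
  exact LieSubmodule.lie_mem_lie (LieSubmodule.mem_top x) hm

variable [LieModule R L M]

lemma lie_lie_le_sup (I J : LieIdeal R L) (N : LieSubmodule R L M) :
    ⁅⁅I, J⁆, N⁆ ≤ ⁅I, ⁅J, N⁆⁆ ⊔ ⁅J, ⁅I, N⁆⁆ := by
  rw [LieSubmodule.lie_le_iff]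
  intro x hx m hm
  rw [← LieSubmodule.mem_toSubmodule, LieSubmodule.lieIdeal_oper_eq_linear_span'] at hx
  induction hx using Submodule.span_induction with
  | mem _ h =>
    obtain ⟨a, ha, b, hb, rfl⟩ := h
    rw [lie_lie]
    exact sub_mem
      (LieSubmodule.mem_sup_left (LieSubmodule.lie_mem_lie ha (LieSubmodule.lie_mem_lie hb hm)))
      (LieSubmodule.mem_sup_right (LieSubmodule.lie_mem_lie hb (LieSubmodule.lie_mem_lie ha hm)))
  | zero => simp
  | add x y _ _ hx hy => rw [add_lie]; exact add_mem hx hy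
  | smul c x _ hx => rw [smul_lie]; exact (⁅I, ⁅J, N⁆⁆ ⊔ ⁅J, ⁅I, N⁆⁆).smul_mem' c hx

lemma lie_lowerCentralSeries_le (l k : ℕ) :
    ⁅lowerCentralSeries R L L l, lowerCentralSeries R L M k⁆ ≤
      lowerCentralSeries R L M (k + l + 1) := by
  induction l generalizing k with
  | zero => simp
  | succ l ih =>
    rw [lowerCentralSeries_succ]
    refine (lie_lie_le_sup _ _ _).trans (sup_le ?_ ?_)
    · rw [← add_assoc, lowerCentralSeries_succ]
      exact LieSubmodule.mono_lie_right _ (ih k)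
    · rw [← lowerCentralSeries_succ, add_comm l, ← add_assoc]
      exact ih (k + 1)

lemma lowerCentralSeries_succ_le {k : ℕ} {S : Submodule R M}
    (h : ∀ x : L, ∀ m ∈ lowerCentralSeries R L M k, ⁅x, m⁆ ∈ S) :
    (lowerCentralSeries R L M (k + 1)).toSubmodule ≤ S := by
  rw [lowerCentralSeries_succ, LieSubmodule.lieIdeal_oper_eq_linear_span', Submodule.span_le]
  rintro _ ⟨x, -, m, hm, rfl⟩
  exact h x m hm

lemma iInf_lowerCentralSeries_eq_top_of_isNilpotent [LieRing.IsNilpotent L]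
    [IsNoetherian R M] [IsArtinian R M] (h : maxTrivSubmodule R L M = ⊥) :
    ⨅ k, lowerCentralSeries R L M k = ⊤ := by
  have hzero : genWeightSpace M (0 : L → R) = ⊥ := by
    rw [← LieSubmodule.normalizer_bot_eq_maxTrivSubmodule] at h
    simp [← iSup_ucs_eq_genWeightSpace_zero, LieSubmodule.ucs_eq_self_of_normalizer_eq_self h]
  rw [iInf_lowerCentralSeries_eq_posFittingComp]
  simpa [hzero] using (isCompl_genWeightSpace_zero_posFittingComp R L M).sup_eq_top

lemma isNilpotent_range_toEnd_of_lowerCentralSeries_le_ker {n : ℕ}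
    (hn : lowerCentralSeries R L L n ≤ LieModule.ker R L M) :
    LieRing.IsNilpotent (toEnd R L M).range := by
  refine LieModule.IsNilpotent.mk (R := R) (k := n) _ ?_
  rw [← LieIdeal.lowerCentralSeries_map_eq n (toEnd R L M).surjective_rangeRestrict,
    LieIdeal.map_eq_bot_iff]
  intro x hx
  exact LieHom.mem_ker.mpr (Subtype.ext (LieHom.mem_ker.mp (hn hx)))

lemma maxTrivSubmodule_range_toEnd_eq_bot (h : maxTrivSubmodule R L M = ⊥) :
    maxTrivSubmodule R (toEnd R L M).range M = ⊥ := by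
  rw [LieSubmodule.eq_bot_iff] at h ⊢
  exact fun m hm ↦ h m fun x ↦ hm ⟨toEnd R L M x, x, rfl⟩

lemma lowerCentralSeries_eq_top_of_maxTrivSubmodule_eq_bot [IsNoetherian R M] [IsArtinian R M]
    {n : ℕ} (hn : lowerCentralSeries R L L n ≤ LieModule.ker R L M)
    (h : maxTrivSubmodule R L M = ⊥) (k : ℕ) :
    lowerCentralSeries R L M k = ⊤ := by
  have := isNilpotent_range_toEnd_of_lowerCentralSeries_le_ker hn
  have htop := iInf_lowerCentralSeries_eq_top_of_isNilpotent (maxTrivSubmodule_range_toEnd_eq_bot h)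
  rw [← LieSubmodule.toSubmodule_inj, ← coe_lcs_range_toEnd_eq, iInf_eq_top.mp htop k]
  rfl

variable (M) in
/-- The submodule `M ^ I` of elements of `M` annihilated by an ideal `I` of `L`. Unlike
`LieModule.maxTrivSubmodule R I M`, it is packaged as a submodule over the whole of `L`,
so that the action of `L` on it can be studied. -/
def idealInvariants (I : LieIdeal R L) : LieSubmodule R L M where
  carrier := {m | ∀ x ∈ I, ⁅x, m⁆ = 0}
  add_mem' ha hb x hx := by rw [lie_add, ha x hx, hb x hx, add_zero]
  zero_mem' x _ := lie_zero x
  smul_mem' c a ha x hx := by rw [lie_smul, ha x hx, smul_zero]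
  lie_mem {y m} hm x hx := by
    rw [leibniz_lie, hm x hx, lie_zero, add_zero]
    exact hm _ (lie_mem_left R L I x y hx)

lemma idealInvariants_iInf_lowerCentralSeries_le [IsArtinian R L] [IsNoetherian R M]
    [IsArtinian R M] (h : maxTrivSubmodule R L M = ⊥) :
    idealInvariants M (⨅ k, lowerCentralSeries R L L k) ≤ ⨅ k, lowerCentralSeries R L M k := by
  obtain ⟨n, hn⟩ := (eventually_iInf_lowerCentralSeries_eq R L L).exists
  set C := idealInvariants M (⨅ k, lowerCentralSeries R L L k)
  have hker : lowerCentralSeries R L L n ≤ LieModule.ker R L C := by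
    intro x hx
    rw [← hn] at hx
    exact (LieModule.mem_ker R L C x).mpr fun m ↦ Subtype.ext (m.2 x hx)
  have htriv : maxTrivSubmodule R L C = ⊥ := by
    rw [LieSubmodule.eq_bot_iff] at h ⊢
    exact fun m hm ↦ Subtype.ext (h m fun x ↦ congrArg Subtype.val (hm x))
  refine le_iInf fun k ↦ ?_
  simpa [lowerCentralSeries_eq_top_of_maxTrivSubmodule_eq_bot hker htriv k] using
    map_lowerCentralSeries_le k C.incl

end LowerCentralSeries

section WeakSubideal

variable {R L : Type*} [CommRing R] [LieRing L] [LieAlgebra R L] {H : LieSubalgebra R L}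

/-- A subalgebra `H` of `L` is a weak subideal if `[H, [H, …, [H, L]]] ⊆ H` for some number of
brackets, expressed through the lower central series of `L` as an `H`-module. It weakens the notion
of a subideal and passes from `H ⊆ L` to `ad H ⊆ Der L`. -/
def IsWeakSubideal (H : LieSubalgebra R L) : Prop :=
  ∃ n, lowerCentralSeries R H L n ≤ H.toLieSubmodule

lemma isWeakSubideal_top : IsWeakSubideal (⊤ : LieSubalgebra R L) :=
  ⟨0, fun x _ ↦ LieSubalgebra.mem_top x⟩

namespace IsWeakSubideal

lemma exists_lowerCentralSeries_add_le_map (hH : IsWeakSubideal H) :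
    ∃ n, ∀ m, lowerCentralSeries R H L (n + m) ≤ (lowerCentralSeries R H H m).map H.incl' := by
  obtain ⟨n, hn⟩ := hH
  refine ⟨n, fun m ↦ ?_⟩
  induction m with
  | zero => exact fun x hx ↦ ⟨⟨x, hn hx⟩, LieSubmodule.mem_top _, rfl⟩
  | succ m ih =>
    rw [← add_assoc, lowerCentralSeries_succ, lowerCentralSeries_succ,
      LieSubmodule.map_bracket_eq]
    exact LieSubmodule.mono_lie_right _ ih

lemma exists_mem_iInf_lowerCentralSeries (hH : IsWeakSubideal H) {x : L}
    (hx : x ∈ ⨅ k, lowerCentralSeries R H L k) :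
    ∃ h ∈ ⨅ k, lowerCentralSeries R H H k, (h : L) = x := by
  obtain ⟨n, hn⟩ := hH.exists_lowerCentralSeries_add_le_map
  rw [LieSubmodule.mem_iInf] at hx
  obtain ⟨h, -, rfl⟩ := hn 0 (hx n)
  refine ⟨h, (LieSubmodule.mem_iInf _).mpr fun m ↦ ?_, rfl⟩
  obtain ⟨h', hh', heq⟩ := hn m (hx (n + m))
  rwa [← Subtype.ext heq]

/-- For a weak subideal `H` of `L`, the intersection of the lower central series of the `H`-module
`L`, as an ideal of `L`. It is contained in `H`, where it is the nilpotent residual. -/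
def residual (hH : IsWeakSubideal H) : LieIdeal R L where
  toSubmodule := (⨅ k, lowerCentralSeries R H L k : LieSubmodule R H L).toSubmodule
  lie_mem {x w} hw := by
    obtain ⟨h, hh, rfl⟩ := hH.exists_mem_iInf_lowerCentralSeries hw
    refine (LieSubmodule.mem_iInf _).mpr fun k ↦ ?_
    rw [← lie_skew, neg_mem_iff]
    have hx : x ∈ lowerCentralSeries R H L 0 := LieSubmodule.mem_top x
    have hlie := LieSubmodule.lie_mem_lie ((LieSubmodule.mem_iInf _).mp hh k) hx
    exact antitone_lowerCentralSeries R H L (by lia) (lie_lowerCentralSeries_le k 0 hlie)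

lemma residual_le (hH : IsWeakSubideal H) : hH.residual.toSubmodule ≤ H.toSubmodule := by
  intro x hx
  obtain ⟨h, -, rfl⟩ := hH.exists_mem_iInf_lowerCentralSeries hx
  exact h.2

lemma ker_residual_le [IsArtinian R H] [IsNoetherian R L] [IsArtinian R L]
    (hH : IsWeakSubideal H) (h : maxTrivSubmodule R H L = ⊥) :
    LieModule.ker R L hH.residual ≤ hH.residual := by
  intro x hx
  refine idealInvariants_iInf_lowerCentralSeries_le h fun w hw ↦ ?_
  have hw' : (w : L) ∈ hH.residual := by
    refine (LieSubmodule.mem_iInf _).mpr fun k ↦ map_lowerCentralSeries_le k H.incl' ?_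
    exact LieSubmodule.mem_map_of_mem ((LieSubmodule.mem_iInf _).mp hw k)
  have hxw : ⁅x, (w : L)⁆ = 0 :=
    congrArg Subtype.val ((LieModule.mem_ker R L hH.residual x).mp hx ⟨w, hw'⟩)
  rw [LieSubalgebra.coe_bracket_of_module, ← lie_skew, hxw, neg_zero]

end IsWeakSubideal

lemma center_eq_bot_of_maxTrivSubmodule_eq_bot (h : maxTrivSubmodule R H L = ⊥) :
    LieAlgebra.center R L = ⊥ := by
  rw [LieSubmodule.eq_bot_iff] at h ⊢
  exact fun x hx ↦ h x fun y ↦ hx y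

lemma maxTrivSubmodule_top_eq_bot (h : LieAlgebra.center R L = ⊥) :
    maxTrivSubmodule R (⊤ : LieSubalgebra R L) L = ⊥ := by
  rw [LieSubmodule.eq_bot_iff] at h ⊢
  exact fun x hx ↦ h x fun y ↦ hx ⟨y, LieSubalgebra.mem_top y⟩

end WeakSubideal

section Finrank

variable {K L : Type*} [Field K] [LieRing L] [LieAlgebra K L] [FiniteDimensional K L]

lemma finrank_le_of_ker_le {I : LieIdeal K L} (h : LieModule.ker K L I ≤ I) :
    Module.finrank K L ≤ Module.finrank K I ^ 2 + Module.finrank K I := by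
  let φ : L →ₗ[K] Module.End K I := toEnd K L I
  calc Module.finrank K L
      = Module.finrank K (LinearMap.range φ) + Module.finrank K (LinearMap.ker φ) :=
        φ.finrank_range_add_finrank_ker.symm
    _ ≤ Module.finrank K (Module.End K I) + Module.finrank K I :=
        add_le_add (Submodule.finrank_le _) (Submodule.finrank_mono h)
    _ = Module.finrank K I ^ 2 + Module.finrank K I := by
        rw [Module.finrank_linearMap, sq]

lemma IsWeakSubideal.finrank_le {H : LieSubalgebra K L} (hH : IsWeakSubideal H)
    (h : maxTrivSubmodule K H L = ⊥) :
    Module.finrank K L ≤ Module.finrank K H ^ 2 + Module.finrank K H := by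
  have hle : Module.finrank K hH.residual ≤ Module.finrank K H :=
    Submodule.finrank_mono hH.residual_le
  exact (finrank_le_of_ker_le (hH.ker_residual_le h)).trans (by gcongr)

end Finrank

section Derivation

variable {R L : Type*} [CommRing R] [LieRing L] [LieAlgebra R L] {H : LieSubalgebra R L}

lemma lowerCentralSeries_map_ad_succ_le (H : LieSubalgebra R L) (k : ℕ) :
    (lowerCentralSeries R (H.map (LieDerivation.ad R L)) (LieDerivation R L L)
      (k + 1)).toSubmodule ≤
      (lowerCentralSeries R H L k).toSubmodule.map
        (LieDerivation.ad R L : L →ₗ[R] LieDerivation R L L) := by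
  induction k with
  | zero =>
    refine lowerCentralSeries_succ_le ?_
    rintro ⟨_, h, -, rfl⟩ D -
    refine ⟨-D h, LieSubmodule.mem_top _, ?_⟩
    change LieDerivation.ad R L (-D h) = ⁅LieDerivation.ad R L h, D⁆
    rw [map_neg, LieDerivation.ad_apply_lieDerivation, neg_neg, LieDerivation.lie_ad]
  | succ k ih =>
    refine lowerCentralSeries_succ_le ?_
    rintro ⟨_, h, hh, rfl⟩ D hD
    obtain ⟨x, hx, rfl⟩ := ih hD
    exact ⟨⁅h, x⁆, lie_mem_lowerCentralSeries_succ (⟨h, hh⟩ : H) hx, LieHom.map_lie _ _ _⟩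

lemma IsWeakSubideal.map_ad (hH : IsWeakSubideal H) :
    IsWeakSubideal (H.map (LieDerivation.ad R L)) := by
  obtain ⟨n, hn⟩ := hH
  exact ⟨n + 1, (lowerCentralSeries_map_ad_succ_le H n).trans (Submodule.map_mono hn)⟩

lemma derivation_eq_zero_of_forall_mem (h : maxTrivSubmodule R H L = ⊥) {D : LieDerivation R L L}
    (hDH : ∀ x ∈ H, D x = 0) {n : ℕ} (hDn : ∀ x ∈ lowerCentralSeries R H L n, D x = 0) :
    D = 0 := by
  induction n with
  | zero => exact LieDerivation.ext fun x ↦ hDn x (LieSubmodule.mem_top x)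
  | succ n ih =>
    refine ih fun x hx ↦ (LieSubmodule.eq_bot_iff _).mp h (D x) fun a ↦ ?_
    have hax : D ⁅(a : L), x⁆ = 0 :=
      hDn _ (lie_mem_lowerCentralSeries_succ a hx)
    simpa [LieDerivation.apply_lie_eq_add, hDH a a.2] using hax

lemma IsWeakSubideal.maxTrivSubmodule_map_ad_eq_bot (hH : IsWeakSubideal H)
    (h : maxTrivSubmodule R H L = ⊥) :
    maxTrivSubmodule R (H.map (LieDerivation.ad R L)) (LieDerivation R L L) = ⊥ := by
  rw [LieSubmodule.eq_bot_iff]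
  intro D hD
  have hDH (x : L) (hx : x ∈ H) : D x = 0 := by
    apply LieDerivation.injective_ad_of_center_eq_bot (center_eq_bot_of_maxTrivSubmodule_eq_bot h)
    have hlie : ⁅LieDerivation.ad R L x, D⁆ = 0 := hD ⟨_, x, hx, rfl⟩
    rw [← LieDerivation.lie_der_ad_eq_ad_der, ← lie_skew, hlie, neg_zero, map_zero]
  obtain ⟨n, hn⟩ := hH
  exact derivation_eq_zero_of_forall_mem h hDH fun x hx ↦ hDH x (hn hx)

lemma center_lieDerivation_eq_bot (h : LieAlgebra.center R L = ⊥) :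
    LieAlgebra.center R (LieDerivation R L L) = ⊥ :=
  center_eq_bot_of_maxTrivSubmodule_eq_bot <|
    isWeakSubideal_top.maxTrivSubmodule_map_ad_eq_bot (maxTrivSubmodule_top_eq_bot h)

end Derivation

section Tower

lemma center_derTower_eq_bot {R : Type u} [CommRing R] {B : LieAlgBundle.{u, v} R}
    (hB : LieAlgebra.center R B.carrier = ⊥) (k : ℕ) :
    LieAlgebra.center R (derTower R B k).carrier = ⊥ := by
  induction k with
  | zero => exact hB
  | succ k ih => exact center_lieDerivation_eq_bot ih

lemma finite_derTower {R : Type u} [CommRing R] [IsNoetherianRing R] (B : LieAlgBundle.{u, v} R)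
    [Module.Finite R B.carrier] (k : ℕ) : Module.Finite R (derTower R B k).carrier := by
  induction k with
  | zero => assumption
  | succ k ih =>
    exact inferInstanceAs
      (Module.Finite R (LieDerivation R (derTower R B k).carrier (derTower R B k).carrier))

variable {K : Type u} [Field K] {B : LieAlgBundle.{u, v} K} [FiniteDimensional K B.carrier]

lemma exists_isWeakSubideal_derTower (hB : LieAlgebra.center K B.carrier = ⊥) (k : ℕ) :
    ∃ H : LieSubalgebra K (derTower K B k).carrier, IsWeakSubideal H ∧
      maxTrivSubmodule K H (derTower K B k).carrier = ⊥ ∧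
      Module.finrank K H ≤ Module.finrank K B.carrier := by
  have hfin := finite_derTower B
  induction k with
  | zero => exact ⟨⊤, isWeakSubideal_top, maxTrivSubmodule_top_eq_bot hB, Submodule.finrank_le _⟩
  | succ k ih =>
    obtain ⟨H, hH, htriv, hrank⟩ := ih
    exact ⟨H.map (LieDerivation.ad K _), hH.map_ad, hH.maxTrivSubmodule_map_ad_eq_bot htriv,
      (Submodule.finrank_map_le _ _).trans hrank⟩

lemma finrank_derTower_le (hB : LieAlgebra.center K B.carrier = ⊥) (k : ℕ) :
    Module.finrank K (derTower K B k).carrier ≤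
      Module.finrank K B.carrier ^ 2 + Module.finrank K B.carrier := by
  obtain ⟨H, hH, htriv, hrank⟩ := exists_isWeakSubideal_derTower hB k
  have := finite_derTower B k
  exact (hH.finrank_le htriv).trans (by gcongr)

end Tower

lemma finrank_lt_finrank_lieDerivation {K L : Type*} [Field K] [LieRing L] [LieAlgebra K L]
    [FiniteDimensional K L] (hZ : LieAlgebra.center K L = ⊥)
    (had : ¬ Function.Bijective (LieDerivation.ad K L)) :
    Module.finrank K L < Module.finrank K (LieDerivation K L L) := by
  let A : L →ₗ[K] LieDerivation K L L := LieDerivation.ad K L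
  have hinj : Function.Injective A := LieDerivation.injective_ad_of_center_eq_bot hZ
  refine (LinearMap.finrank_le_finrank_of_injective hinj).lt_of_ne fun heq ↦ had ⟨hinj, ?_⟩
  exact (LinearMap.injective_iff_surjective_of_finrank_eq_finrank heq).mp hinj

end DerivationTower

open DerivationTower in
theorem chevalley_derivation_tower_stabilizes_general
    (K : Type u) [Field K]
    (g : Type v) [LieRing g] [LieAlgebra K g] [FiniteDimensional K g]
    (hZ : LieAlgebra.center K g = ⊥) :
    ∃ k : ℕ, Function.Bijective
      (LieDerivation.ad K ((derTower K ⟨g⟩ k).carrier)) := by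
  by_contra! hbij
  have hmono : StrictMono fun k ↦ Module.finrank K (derTower K ⟨g⟩ k).carrier := by
    refine strictMono_nat_of_lt_succ fun k ↦ ?_
    have := finite_derTower (R := K) ⟨g⟩ k
    exact finrank_lt_finrank_lieDerivation (center_derTower_eq_bot hZ k) (hbij k)
  let d := Module.finrank K g ^ 2 + Module.finrank K g
  exact (hmono.le_apply (x := d + 1)).not_gt
    (Nat.lt_succ_of_le (finrank_derTower_le (B := ⟨g⟩) hZ (d + 1)))

/-- Chevalley's theorem: the derivation tower of a finite-dimensional Lie algebra with
trivial center over a field of characteristic zero stabilizes after finitely many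
steps: for some `k`, the adjoint map `ad : Der^k(g) → Der^{k+1}(g) = Der (Der^k g)`
is an isomorphism (in particular every derivation of `Der^k(g)` is inner). -/
theorem chevalley_derivation_tower_stabilizes
    (K : Type u) [Field K] [CharZero K]
    (g : Type v) [LieRing g] [LieAlgebra K g] [FiniteDimensional K g]
    (hZ : LieAlgebra.center K g = ⊥) :
    ∃ k : ℕ, Function.Bijective
      (LieDerivation.ad K ((derTower K ⟨g⟩ k).carrier)) :=
  chevalley_derivation_tower_stabilizes_general K g hZ
end
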